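/- Bound on the approximation bias b₂: under assumption G3(1), if g′ exists and is uniformly bounded (G5) and K ∈ L¹, then for every h > 0 and Δ > 0, |E[ĝ_h(x₀)] − K_h ⋆ g(x₀)| ≤ 2 ‖g′‖_∞ ‖K‖₁ ‖g‖₁ Δ. -/

import Mathlib

open MeasureTheory Real Filter Finset Asymptotics
open scoped Topology

noncomputable section

namespace LevyAdapt

/-- Fourier transform `g*(u) = ∫ e^{iux} g(x) dx`. -/
def ft (g : ℝ → ℝ) (u : ℝ) : ℂ :=
  ∫ x : ℝ, Complex.exp (Complex.I * u * x) * (g x : ℂ)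

/-- Scaled kernel `K_h(x) = h⁻¹ K(x/h)`. -/
def sk (K : ℝ → ℝ) (h x : ℝ) : ℝ := h⁻¹ * K (x / h)

/-- L¹ norm. -/
def nl1 (f : ℝ → ℝ) : ℝ := ∫ x : ℝ, |f x|

/-- Squared L² norm. -/
def nl2sq (f : ℝ → ℝ) : ℝ := ∫ x : ℝ, (f x) ^ 2

/-- Sup norm. -/
def nsup (f : ℝ → ℝ) : ℝ := ⨆ x : ℝ, |f x|

/-- L¹ norm of a complex-valued function on ℝ. -/
def cnl1 (f : ℝ → ℂ) : ℝ := ∫ u : ℝ, ‖f u‖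

/-- Squared L² norm of a complex-valued function on ℝ. -/
def cnl2sq (f : ℝ → ℂ) : ℝ := ∫ u : ℝ, ‖f u‖ ^ 2

/-- The largest integer strictly smaller than `β` (for `β > 0`). -/
def hfloor (β : ℝ) : ℕ := ⌈β⌉₊ - 1

/-- The Hölder class `H(β, L)`: with `l = hfloor β`, the `l`-th derivative exists and is
`(β - l)`-Hölder with constant `L`. -/
def Holder (β L : ℝ) (f : ℝ → ℝ) : Prop :=
  (∀ m : ℕ, m < hfloor β → Differentiable ℝ (iteratedDeriv m f)) ∧
  ∀ x y : ℝ,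
    |iteratedDeriv (hfloor β) f x - iteratedDeriv (hfloor β) f y| ≤
      L * |x - y| ^ (β - (hfloor β : ℝ))

/-- Assumption G1: `g ∈ L²`. -/
def G1 (g : ℝ → ℝ) : Prop := Integrable (fun x : ℝ => (g x) ^ 2)

/-- Assumption G2: `g*` is differentiable a.e. and its derivative is integrable. -/
def G2 (g : ℝ → ℝ) : Prop :=
  (∀ᵐ u : ℝ, DifferentiableAt ℝ (ft g) u) ∧ Integrable (deriv (ft g))

/-- Assumption G3(p): `∫ |x|^(p-1) |g(x)| dx < ∞`. -/
def G3 (p : ℕ) (g : ℝ → ℝ) : Prop :=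
  Integrable (fun x : ℝ => |x| ^ (p - 1) * |g x|)

/-- Assumption G5: `g'` exists and is uniformly bounded. -/
def G5 (g : ℝ → ℝ) : Prop :=
  Differentiable ℝ g ∧ BddAbove (Set.range fun x : ℝ => |deriv g x|)

/-- Assumption K1: `K ∈ L¹ ∩ L² ∩ L^∞` and `K* ∈ L¹`. -/
def K1 (K : ℝ → ℝ) : Prop :=
  Measurable K ∧ Integrable K ∧ Integrable (fun x : ℝ => (K x) ^ 2) ∧
    BddAbove (Set.range fun x : ℝ => |K x|) ∧ Integrable (ft K)

/-- `K` is a kernel of order `m`. -/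
def KernelOrder (m : ℕ) (K : ℝ → ℝ) : Prop :=
  (∀ j : ℕ, j ≤ m → Integrable (fun t : ℝ => t ^ j * K t)) ∧
  (∫ t : ℝ, K t) = 1 ∧
  ∀ j : ℕ, 1 ≤ j → j ≤ m → (∫ t : ℝ, t ^ j * K t) = 0

/-- Assumption K2(α): `K` is a kernel of order `hfloor α` and `∫ |x|^α |K(x)| dx < ∞`. -/
def K2 (α : ℝ) (K : ℝ → ℝ) : Prop :=
  KernelOrder (hfloor α) K ∧ Integrable (fun x : ℝ => |x| ^ α * |K x|)

/-- `P` is the law of an increment of length `Δ` of the pure-jump Lévy process with Lévy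
density `N`, characterized through its characteristic function. -/
def IncrementLawN (P : Measure ℝ) (Δ : ℝ) (N : ℝ → ℝ) : Prop :=
  ∀ u : ℝ,
    (∫ x : ℝ, Complex.exp (Complex.I * u * x) ∂P) =
      Complex.exp ((Δ : ℂ) * ∫ x : ℝ, (Complex.exp (Complex.I * u * x) - 1) * (N x : ℂ))

/-- Increment law expressed through `g(x) = x N(x)`, i.e. `N(x) = g(x)/x`. -/
def IncrementLaw (P : Measure ℝ) (Δ : ℝ) (g : ℝ → ℝ) : Prop :=
  IncrementLawN P Δ fun x => g x / x

/-- The `n`-sample (i.i.d.) product measure. -/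
def pm (P : Measure ℝ) [SigmaFinite P] (n : ℕ) : Measure (Fin n → ℝ) :=
  Measure.pi fun _ => P

/-- The kernel estimator `ĝ_h(x) = (nΔ)⁻¹ ∑ₖ Zₖ K_h(x - Zₖ)`. -/
def ghat (K : ℝ → ℝ) (h Δ : ℝ) {n : ℕ} (z : Fin n → ℝ) (x : ℝ) : ℝ :=
  ((n : ℝ) * Δ)⁻¹ * ∑ k : Fin n, z k * sk K h (x - z k)

/-- The auxiliary estimator `ĝ_{h,h'}(x)` using the convolved kernel `K_{h'} ⋆ K_h`. -/
def ghat2 (K : ℝ → ℝ) (h h' Δ : ℝ) {n : ℕ} (z : Fin n → ℝ) (x : ℝ) : ℝ :=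
  ((n : ℝ) * Δ)⁻¹ *
    ∑ k : Fin n, z k * ∫ y : ℝ, sk K h' y * sk K h (x - z k - y)

/-- Mean `E[ĝ_h(x)]` of the kernel estimator. -/
def mghat (K : ℝ → ℝ) (h Δ : ℝ) (n : ℕ) (P : Measure ℝ) [SigmaFinite P] (x : ℝ) : ℝ :=
  ∫ z : Fin n → ℝ, ghat K h Δ z x ∂(pm P n)

/-- Mean `E[ĝ_{h,h'}(x)]` of the auxiliary estimator. -/
def mghat2 (K : ℝ → ℝ) (h h' Δ : ℝ) (n : ℕ) (P : Measure ℝ) [SigmaFinite P] (x : ℝ) : ℝ :=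
  ∫ z : Fin n → ℝ, ghat2 K h h' Δ z x ∂(pm P n)

/-- The pointwise mean squared error `E[(ĝ_h(x) - g(x))²]`. -/
def mse (K : ℝ → ℝ) (h Δ : ℝ) (n : ℕ) (P : Measure ℝ) [SigmaFinite P]
    (g : ℝ → ℝ) (x : ℝ) : ℝ :=
  ∫ z : Fin n → ℝ, (ghat K h Δ z x - g x) ^ 2 ∂(pm P n)

/-- The variance `Var[ĝ_h(x)]`. -/
def varghat (K : ℝ → ℝ) (h Δ : ℝ) (n : ℕ) (P : Measure ℝ) [SigmaFinite P] (x : ℝ) : ℝ :=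
  ∫ z : Fin n → ℝ, (ghat K h Δ z x - mghat K h Δ n P x) ^ 2 ∂(pm P n)

/-- The constant `c₁ = 2 (L/⌊β⌋! ∫|K(v)||v|^β dv)²`. -/
def c1 (K : ℝ → ℝ) (β L : ℝ) : ℝ :=
  2 * (L / (Nat.factorial (hfloor β) : ℝ) * ∫ v : ℝ, |K v| * |v| ^ β) ^ 2

/-- The constant `c₁' = 2 (2‖g'‖_∞ ‖g‖₁ ‖K‖₁)²`. -/
def c1' (K g : ℝ → ℝ) : ℝ := 2 * (2 * nsup (deriv g) * nl1 g * nl1 K) ^ 2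

/-- The constant `c₂ = ‖(g*)'‖₁ ‖K‖₂² / (2π)`. -/
def c2 (K g : ℝ → ℝ) : ℝ := cnl1 (deriv (ft g)) * nl2sq K / (2 * π)

/-- The constant `c₂' = ‖K‖₂² ‖g‖₂²`. -/
def c2' (K g : ℝ → ℝ) : ℝ := nl2sq K * nl2sq g

/-- The constant `C₀ = (c/(2π)) ‖K‖₂² (‖(g*)'‖₁ + ‖g*‖₂²)`. -/
def C0 (c : ℝ) (K g : ℝ → ℝ) : ℝ :=
  c / (2 * π) * nl2sq K * (cnl1 (deriv (ft g)) + cnl2sq (ft g))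

/-- The penalty `V(h) = C₀ log(nΔ) / (nhΔ)`. -/
def Vfun (c : ℝ) (K g : ℝ → ℝ) (n : ℕ) (Δ h : ℝ) : ℝ :=
  C0 c K g * Real.log ((n : ℝ) * Δ) / ((n : ℝ) * h * Δ)

/-- The bandwidth collection `H = {j/M : 1 ≤ j ≤ M}`. -/
def bset (M : ℕ) : Finset ℝ := (Finset.Icc 1 M).image fun j : ℕ => (j : ℝ) / (M : ℝ)

/-- The quantity `A(h, x₀) = sup_{h' ∈ H} [ |ĝ_{h,h'}(x₀) - ĝ_{h'}(x₀)|² - V(h') ]₊`. -/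
def Afun (K : ℝ → ℝ) (Δ : ℝ) (H : Finset ℝ) (V : ℝ → ℝ) {n : ℕ}
    (z : Fin n → ℝ) (x h : ℝ) : ℝ :=
  ⨆ h' ∈ H, max ((ghat2 K h h' Δ z x - ghat K h' Δ z x) ^ 2 - V h') 0

/-- Average `Δ̄` of the sampling intervals. -/
def dbar {n : ℕ} (Δs : Fin n → ℝ) : ℝ := (n : ℝ)⁻¹ * ∑ k, Δs k

/-- Average `Δ²‾` of the squared sampling intervals. -/
def d2bar {n : ℕ} (Δs : Fin n → ℝ) : ℝ := (n : ℝ)⁻¹ * ∑ k, (Δs k) ^ 2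

/-- The truncation level `μ_n(h)`. -/
def mulev (c : ℝ) (K g : ℝ → ℝ) (n : ℕ) (Δ h : ℝ) : ℝ :=
  nl2sq K * (cnl1 (deriv (ft g)) + cnl2sq (ft g)) /
    (2 * π * nsup K * Real.sqrt (Vfun c K g n Δ h / 6))

/-- The truncated summand `W(h)` as a function of a single observation. -/
def Wtr (c : ℝ) (K g : ℝ → ℝ) (n : ℕ) (Δ h x₀ x : ℝ) : ℝ :=
  if |x| ≤ mulev c K g n Δ h then x / Δ * sk K h (x₀ - x) else 0

/-- The remainder summand `T(h)` as a function of a single observation. -/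
def Ttr (c : ℝ) (K g : ℝ → ℝ) (n : ℕ) (Δ h x₀ x : ℝ) : ℝ :=
  if mulev c K g n Δ h < |x| then x / Δ * sk K h (x₀ - x) else 0

/-- The empirical estimator of `‖(g*)'‖₁`. -/
def estDeriv (Δ : ℝ) {n : ℕ} (z : Fin n → ℝ) (hband : ℝ) : ℝ :=
  ∫ u : ℝ, ‖(((n : ℝ) * Δ)⁻¹ : ℂ) *
      ∑ k : Fin n, (z k : ℂ) ^ 2 *
        (Set.indicator (Set.Icc (-1 : ℝ) 1) (fun _ => (1 : ℂ)) (u * hband)) *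
        Complex.exp (Complex.I * u * z k)‖

/-- The empirical estimator of `‖g*‖₂²`. -/
def estL2 (Δ : ℝ) {n : ℕ} (z : Fin n → ℝ) (hband : ℝ) : ℝ :=
  ∫ u : ℝ, ‖(((n : ℝ) * Δ)⁻¹ : ℂ) *
      ∑ k : Fin n, (z k : ℂ) *
        (Set.indicator (Set.Icc (-1 : ℝ) 1) (fun _ => (1 : ℂ)) (u * hband)) *
        Complex.exp (Complex.I * u * z k)‖ ^ 2

/-- The data-driven penalty `V(h)` built with the estimated constant `C₀`. -/
def VfunHat (c : ℝ) (K : ℝ → ℝ) (n : ℕ) (Δ : ℝ) {m : ℕ} (z : Fin m → ℝ) (h : ℝ) : ℝ :=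
  c / (2 * π) * nl2sq K *
      (estDeriv Δ z (((n : ℝ) * Δ) ^ (-(1/3 : ℝ))) + estL2 Δ z (((n : ℝ) * Δ) ^ (-(1/3 : ℝ)))) *
    Real.log ((n : ℝ) * Δ) / ((n : ℝ) * h * Δ)

/-!
Differentiating the characteristic function `χ` of an increment `Z` gives
`χ' = i Δ g* χ = i (Δ (g ⋆ P))*`, which by Fourier inversion says `x P(dx) = Δ (g ⋆ P)(x) dx`, that
is `E[Z F(Z)] = Δ ∫ F (g ⋆ P)`. No moment of `Z` has to be assumed for this: the identity is first
obtained for test functions `F`, where integration by parts against a Schwartz function replaces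
differentiation under `E`. With `F` the sign function it gives `E|Z| ≤ Δ ‖g‖₁`, and with
`F = K_h(x₀ - ·)` it turns the bias into `∫ (g ⋆ P - g) K_h(x₀ - ·)`, where
`|g ⋆ P - g| ≤ ‖g'‖_∞ E|Z|` by the mean value inequality.
-/

section RadonNikodym

open scoped ContDiff

lemma locallyIntegrable_rnDeriv_mul {X : Type*} [TopologicalSpace X] [T2Space X]
    [WeaklyLocallyCompactSpace X] [MeasurableSpace X] [OpensMeasurableSpace X] {μ ν : Measure X}
    [SigmaFinite μ] [SigmaFinite ν] {f : X → ℝ} (hμν : μ ≪ ν) (hf : LocallyIntegrable f μ) :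
    LocallyIntegrable (fun x => (μ.rnDeriv ν x).toReal * f x) ν := by
  refine locallyIntegrable_iff.2 fun s hs => ?_
  have hind : s.indicator (fun x => (μ.rnDeriv ν x).toReal * f x) =
      fun x => (μ.rnDeriv ν x).toReal * s.indicator f x :=
    funext fun x => Set.indicator_mul_right s _ f
  rw [← integrable_indicator_iff hs.measurableSet, hind,
    integrable_toReal_rnDeriv_mul_iff hμν, integrable_indicator_iff hs.measurableSet]
  exact hf.integrableOn_isCompact hs

variable {E : Type*} [NormedAddCommGroup E] [NormedSpace ℝ E] [FiniteDimensional ℝ E]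
  [MeasurableSpace E] [BorelSpace E] {μ ν : Measure E} [SigmaFinite μ] [SigmaFinite ν]
  {f k : E → ℝ}

lemma rnDeriv_add_mul_ae_eq_of_integral_contDiff_mul_eq
    (hf : LocallyIntegrable f μ) (hk : LocallyIntegrable k ν)
    (h : ∀ φ : E → ℝ, ContDiff ℝ ∞ φ → HasCompactSupport φ →
      ∫ x, φ x * f x ∂μ = ∫ x, φ x * k x ∂ν) :
    (fun x => (μ.rnDeriv (μ + ν) x).toReal * f x) =ᵐ[μ + ν]
      fun x => (ν.rnDeriv (μ + ν) x).toReal * k x := by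
  have hμ : μ ≪ μ + ν := Measure.AbsolutelyContinuous.rfl.add_right ν
  have hν : ν ≪ μ + ν := Measure.AbsolutelyContinuous.rfl.add_right' μ
  refine ae_eq_of_integral_contDiff_smul_eq (locallyIntegrable_rnDeriv_mul hμ hf)
    (locallyIntegrable_rnDeriv_mul hν hk) fun φ hφ hφc => ?_
  simp only [smul_eq_mul, mul_left_comm (φ _)]
  rw [integral_toReal_rnDeriv_mul hμ, integral_toReal_rnDeriv_mul hν, h φ hφ hφc]

lemma integrable_mul_iff_of_integral_contDiff_mul_eq
    (hf : LocallyIntegrable f μ) (hk : LocallyIntegrable k ν)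
    (h : ∀ φ : E → ℝ, ContDiff ℝ ∞ φ → HasCompactSupport φ →
      ∫ x, φ x * f x ∂μ = ∫ x, φ x * k x ∂ν) (F : E → ℝ) :
    Integrable (fun x => f x * F x) μ ↔ Integrable (fun x => k x * F x) ν := by
  have hμ : μ ≪ μ + ν := Measure.AbsolutelyContinuous.rfl.add_right ν
  have hν : ν ≪ μ + ν := Measure.AbsolutelyContinuous.rfl.add_right' μ
  rw [← integrable_toReal_rnDeriv_mul_iff hμ, ← integrable_toReal_rnDeriv_mul_iff hν]
  refine integrable_congr ?_
  filter_upwards [rnDeriv_add_mul_ae_eq_of_integral_contDiff_mul_eq hf hk h] with x hx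
  rw [← mul_assoc, hx, mul_assoc]

lemma integral_mul_eq_of_integral_contDiff_mul_eq
    (hf : LocallyIntegrable f μ) (hk : LocallyIntegrable k ν)
    (h : ∀ φ : E → ℝ, ContDiff ℝ ∞ φ → HasCompactSupport φ →
      ∫ x, φ x * f x ∂μ = ∫ x, φ x * k x ∂ν) (F : E → ℝ) :
    ∫ x, f x * F x ∂μ = ∫ x, k x * F x ∂ν := by
  have hμ : μ ≪ μ + ν := Measure.AbsolutelyContinuous.rfl.add_right ν
  have hν : ν ≪ μ + ν := Measure.AbsolutelyContinuous.rfl.add_right' μ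
  rw [← integral_toReal_rnDeriv_mul hμ, ← integral_toReal_rnDeriv_mul hν]
  refine integral_congr_ae ?_
  filter_upwards [rnDeriv_add_mul_ae_eq_of_integral_contDiff_mul_eq hf hk h] with x hx
  rw [← mul_assoc, hx, mul_assoc]

end RadonNikodym

section Fourier

open scoped FourierTransform SchwartzMap ContDiff

lemma norm_exp_I_mul_mul (u x : ℝ) : ‖Complex.exp (Complex.I * u * x)‖ = 1 := by
  rw [mul_assoc, ← Complex.ofReal_mul, Complex.norm_exp_I_mul_ofReal]

lemma charFun_eq_integral_exp_I_mul (P : Measure ℝ) (u : ℝ) :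
    charFun P u = ∫ x, Complex.exp (Complex.I * u * x) ∂P := by
  simp only [charFun_apply_real, mul_comm Complex.I, mul_right_comm _ Complex.I]

lemma integral_fourier_mul {μ : Measure ℝ} [SigmaFinite μ] {ψ f : ℝ → ℂ} (hψ : Integrable ψ)
    (hf : Integrable f μ) :
    ∫ x, 𝓕 ψ x * f x ∂μ =
      ∫ v, ψ v * ∫ x, Complex.exp (Complex.I * ((-(2 * π) * v : ℝ) : ℂ) * x) * f x ∂μ := by
  have h := VectorFourier.integral_fourierIntegral_smul_eq_flip (L := innerₗ ℝ) (μ := volume)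
    (ν := μ) Real.continuous_fourierChar continuous_inner hψ hf
  refine h.trans (integral_congr_ae (.of_forall fun v => congrArg (ψ v * ·) ?_))
  refine integral_congr_ae (.of_forall fun x => ?_)
  simp only [Circle.smul_def, Real.fourierChar_apply, smul_eq_mul]
  congr 2
  simp
  ring

variable {P : Measure ℝ} {k : ℝ → ℝ}

lemma norm_ft_le (k : ℝ → ℝ) (u : ℝ) : ‖ft k u‖ ≤ nl1 k :=
  (norm_integral_le_integral_norm _).trans_eq (by simp [nl1, norm_exp_I_mul_mul])

lemma continuous_ft (hk : Integrable k) : Continuous (ft k) :=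
  continuous_of_dominated
    (fun u => (Continuous.aestronglyMeasurable (by fun_prop)).mul hk.ofReal.1)
    (fun u => .of_forall fun x => by rw [norm_mul, norm_exp_I_mul_mul, one_mul, Complex.norm_real])
    hk.norm (.of_forall fun x => by fun_prop)

lemma integral_deriv_mul_charFun (hk : Integrable k)
    (hP : ∀ u, HasDerivAt (charFun P) (Complex.I * ft k u) u) {ψ : ℝ → ℂ}
    (hψ : Differentiable ℝ ψ) (hψ_int : Integrable ψ) (hψ'_int : Integrable (deriv ψ)) :
    ∫ v, deriv ψ v * charFun P (-(2 * π) * v) =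
      2 * π * Complex.I * ∫ v, ψ v * ft k (-(2 * π) * v) := by
  have hχ : ∀ v, HasDerivAt (fun v => charFun P (-(2 * π) * v))
      (-(2 * π * Complex.I) * ft k (-(2 * π) * v)) v := fun v => by
    refine ((hP _).scomp v ((hasDerivAt_id v).const_mul _)).congr_deriv ?_
    simp
    ring
  have hχ_meas : AEStronglyMeasurable fun v => charFun P (-(2 * π) * v) :=
    (continuous_iff_continuousAt.2 fun v => (hχ v).continuousAt).aestronglyMeasurable
  have hχ_le : ∀ v, ‖charFun P (-(2 * π) * v)‖ ≤ P.real Set.univ := fun v =>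
    norm_charFun_le _
  have hχ'_meas : AEStronglyMeasurable fun v => -(2 * π * Complex.I) * ft k (-(2 * π) * v) :=
    have := continuous_ft hk
    Continuous.aestronglyMeasurable (by fun_prop)
  have hχ'_le : ∀ v, ‖-(2 * π * Complex.I) * ft k (-(2 * π) * v)‖ ≤
      ‖-(2 * π * Complex.I)‖ * nl1 k := fun v =>
    (norm_mul_le _ _).trans (mul_le_mul_of_nonneg_left (norm_ft_le k _) (norm_nonneg _))
  have hparts := integral_mul_deriv_eq_deriv_mul_of_integrable
    (fun v _ => (hψ v).hasDerivAt) (fun v _ => hχ v)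
    (hψ_int.mul_bdd hχ'_meas (.of_forall hχ'_le)) (hψ'_int.mul_bdd hχ_meas (.of_forall hχ_le))
    (hψ_int.mul_bdd hχ_meas (.of_forall hχ_le))
  simp only [neg_mul, mul_neg, mul_left_comm (ψ _), integral_neg, integral_const_mul, neg_inj]
    at hparts ⊢
  exact hparts.symm

variable [IsFiniteMeasure P]

lemma integral_fourier_mul_id (hk : Integrable k)
    (hP : ∀ u, HasDerivAt (charFun P) (Complex.I * ft k u) u) {ψ : ℝ → ℂ}
    (hψ : Differentiable ℝ ψ) (hψ_int : Integrable ψ) (hψ'_int : Integrable (deriv ψ)) :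
    ∫ x, 𝓕 ψ x * x ∂P = ∫ x, 𝓕 ψ x * k x := by
  refine mul_left_cancel₀ Complex.two_pi_I_ne_zero ?_
  calc 2 * π * Complex.I * ∫ x, 𝓕 ψ x * x ∂P
      = ∫ x, 𝓕 (deriv ψ) x * 1 ∂P := by
        simp only [← integral_const_mul, Real.fourier_deriv hψ_int hψ hψ'_int, smul_eq_mul,
          mul_one, mul_assoc, mul_comm (𝓕 ψ _)]
    _ = ∫ v, deriv ψ v * charFun P (-(2 * π) * v) := by
        rw [integral_fourier_mul hψ'_int (integrable_const 1)]
        simp only [mul_one, charFun_eq_integral_exp_I_mul]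
    _ = 2 * π * Complex.I * ∫ v, ψ v * ft k (-(2 * π) * v) :=
        integral_deriv_mul_charFun hk hP hψ hψ_int hψ'_int
    _ = 2 * π * Complex.I * ∫ x, 𝓕 ψ x * k x := by
        rw [integral_fourier_mul (f := fun x => (k x : ℂ)) hψ_int hk.ofReal]
        rfl

lemma integral_contDiff_mul_id (hk : Integrable k)
    (hP : ∀ u, HasDerivAt (charFun P) (Complex.I * ft k u) u) (φ : ℝ → ℝ) (hφ : ContDiff ℝ ∞ φ)
    (hφc : HasCompactSupport φ) : ∫ x, φ x * x ∂P = ∫ x, φ x * k x := by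
  have hφc' : HasCompactSupport (Complex.ofRealCLM ∘ φ) := hφc.comp_left rfl
  obtain ⟨ψ, hψ⟩ : ∃ ψ : 𝓢(ℝ, ℂ), 𝓕 ψ = hφc'.toSchwartzMap (by fun_prop) :=
    ⟨𝓕⁻ _, FourierTransform.fourier_fourierInv_eq _⟩
  have h := integral_fourier_mul_id hk hP ψ.differentiable ψ.integrable
    (SchwartzMap.derivCLM ℂ ℂ ψ).integrable
  rw [← SchwartzMap.fourier_coe, hψ] at h
  simpa [← Complex.ofReal_mul, integral_complex_ofReal] using h

lemma integrable_id_mul_iff_of_hasDerivAt_charFun (hk : Integrable k)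
    (hP : ∀ u, HasDerivAt (charFun P) (Complex.I * ft k u) u) (F : ℝ → ℝ) :
    Integrable (fun x => x * F x) P ↔ Integrable fun x => k x * F x :=
  integrable_mul_iff_of_integral_contDiff_mul_eq continuous_id.locallyIntegrable
    hk.locallyIntegrable (integral_contDiff_mul_id hk hP) F

lemma integral_id_mul_eq_of_hasDerivAt_charFun (hk : Integrable k)
    (hP : ∀ u, HasDerivAt (charFun P) (Complex.I * ft k u) u) (F : ℝ → ℝ) :
    ∫ x, x * F x ∂P = ∫ x, k x * F x :=
  integral_mul_eq_of_integral_contDiff_mul_eq continuous_id.locallyIntegrable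
    hk.locallyIntegrable (integral_contDiff_mul_id hk hP) F

lemma integrable_id_and_integral_abs_le_of_hasDerivAt_charFun (hk : Integrable k)
    (hP : ∀ u, HasDerivAt (charFun P) (Complex.I * ft k u) u) :
    Integrable id P ∧ ∫ x, |x| ∂P ≤ nl1 k := by
  have hiff := integrable_id_mul_iff_of_hasDerivAt_charFun hk hP fun x => |x| / x
  have heq := integral_id_mul_eq_of_hasDerivAt_charFun hk hP fun x => |x| / x
  have hsign_le : ∀ x : ℝ, |(|x| / x)| ≤ 1 := fun x => by
    rw [abs_div, abs_abs]
    exact div_self_le_one _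
  have hsign_mul : ∀ x : ℝ, x * (|x| / x) = |x| := fun x =>
    mul_div_cancel_of_imp' fun hx => by rw [hx, abs_zero]
  have hk_sign : Integrable fun x => k x * (|x| / x) :=
    hk.mul_bdd (Measurable.aestronglyMeasurable (by fun_prop)) (.of_forall hsign_le)
  simp only [hsign_mul] at hiff heq
  refine ⟨(integrable_norm_iff aestronglyMeasurable_id).1 (hiff.2 hk_sign), ?_⟩
  rw [heq]
  refine integral_mono hk_sign hk.abs fun x => (le_abs_self _).trans ?_
  rw [abs_mul]
  exact mul_le_of_le_one_right (abs_nonneg _) (hsign_le x)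

end Fourier

section Convolution

open scoped Convolution

/-- The convolution `g ⋆ P` of a function with a measure, given pointwise by an integral against
`P`. If `y ↦ g (z - y)` is not `P`-integrable, its value at `z` is `0`. -/
def mconv (g : ℝ → ℝ) (P : Measure ℝ) (z : ℝ) : ℝ := ∫ y, g (z - y) ∂P

variable {g : ℝ → ℝ} {P : Measure ℝ}

lemma integrable_mconv (hg : Integrable g) (P : Measure ℝ) [IsFiniteMeasure P] :
    Integrable (mconv g P) := by
  have h := ((integrable_const (1 : ℝ)).convolution_integrand (μ := volume) (ν := P)
    (ContinuousLinearMap.mul ℝ ℝ) hg).integral_prod_left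
  simp only [ContinuousLinearMap.mul_apply', one_mul] at h
  exact h

lemma integral_mconv (hg : Integrable g) (P : Measure ℝ) [IsFiniteMeasure P] :
    ∫ z, mconv g P z = P.real Set.univ * ∫ x, g x := by
  have h := integral_convolution (ContinuousLinearMap.mul ℝ ℝ) (integrable_const (1 : ℝ) (μ := P))
    hg
  simpa [MeasureTheory.convolution, mconv] using h

lemma nl1_mconv_le (hg : Integrable g) (P : Measure ℝ) [IsFiniteMeasure P] :
    nl1 (mconv g P) ≤ P.real Set.univ * nl1 g :=
  (integral_mono (integrable_mconv hg P).abs (integrable_mconv hg.abs P) fun _ =>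
    abs_integral_le_integral_abs).trans_eq (integral_mconv hg.abs P)

lemma ft_mconv (hg : Integrable g) (P : Measure ℝ) [IsFiniteMeasure P] (u : ℝ) :
    ft (mconv g P) u = ft g u * charFun P u := by
  let e : ℝ → ℂ := fun x => Complex.exp (Complex.I * u * x)
  have he : ∀ x y, e (x + y) = e x * e y := fun x y => by
    simp only [e, ← Complex.exp_add, ← mul_add, Complex.ofReal_add]
  have hconv : (fun z => e z * (mconv g P z : ℂ)) =
      e ⋆[ContinuousLinearMap.mul ℝ ℂ, P] fun x => e x * (g x : ℂ) := funext fun z => by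
    simp only [mconv, MeasureTheory.convolution, ContinuousLinearMap.mul_apply', ← mul_assoc, ← he,
      add_sub_cancel, integral_const_mul, integral_complex_ofReal]
  have he_bdd : ∀ {μ : Measure ℝ} {f : ℝ → ℂ}, Integrable f μ →
      Integrable (fun x => e x * f x) μ := fun hf =>
    hf.bdd_mul (Continuous.aestronglyMeasurable (by fun_prop))
      (.of_forall fun x => (norm_exp_I_mul_mul u x).le)
  have he_int : Integrable e P := by simpa using he_bdd (integrable_const (1 : ℂ))
  rw [charFun_eq_integral_exp_I_mul, mul_comm]
  exact (congrArg (fun f => ∫ z, f z) hconv).trans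
    (integral_convolution (ContinuousLinearMap.mul ℝ ℂ) he_int (he_bdd hg.ofReal))

lemma abs_mconv_le {M : ℝ} (hM : ∀ x, |g x| ≤ M) (P : Measure ℝ) [IsProbabilityMeasure P] (z : ℝ) :
    |mconv g P z| ≤ M := by
  have h : ‖mconv g P z‖ ≤ M * P.real Set.univ :=
    norm_integral_le_of_norm_le_const (.of_forall fun y => hM (z - y))
  simpa using h

lemma abs_mconv_sub_le [IsProbabilityMeasure P] {L : NNReal} (hg : LipschitzWith L g)
    (hP : Integrable id P) (z : ℝ) : |mconv g P z - g z| ≤ L * ∫ y, |y| ∂P := by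
  have hlip : ∀ y, |g (z - y) - g z| ≤ L * |y| := fun y => by
    simpa [Real.dist_eq] using hg.dist_le_mul (z - y) z
  have hgc := hg.continuous
  have hL_abs : Integrable (fun y => (L : ℝ) * |y|) P := hP.abs.const_mul _
  have hdiff : Integrable (fun y => g (z - y) - g z) P :=
    hL_abs.mono' (Continuous.aestronglyMeasurable (by fun_prop)) (.of_forall hlip)
  have hmean : mconv g P z - g z = ∫ y, (g (z - y) - g z) ∂P := by
    have h := integral_add hdiff (integrable_const (g z))
    simp only [sub_add_cancel, integral_const, probReal_univ, one_smul] at h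
    exact sub_eq_of_eq_add h
  rw [hmean, ← integral_const_mul, ← Real.norm_eq_abs]
  exact norm_integral_le_of_norm_le hL_abs (.of_forall hlip)

end Convolution

section LevyIncrements

/-- The exponent `u ↦ ∫ (e^{iux} - 1) N(x) dx` of the law of a unit increment, for the Lévy density
`N(x) = g(x)/x`. -/
def levyExponent (g : ℝ → ℝ) (u : ℝ) : ℂ :=
  ∫ x : ℝ, (Complex.exp (Complex.I * u * x) - 1) * ((g x / x : ℝ) : ℂ)

variable {g : ℝ → ℝ}

lemma hasDerivAt_exp_I_mul_mul (u x : ℝ) :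
    HasDerivAt (fun s : ℝ => Complex.exp (Complex.I * s * x))
      (Complex.I * x * Complex.exp (Complex.I * u * x)) u := by
  refine (((hasDerivAt_id u).ofReal_comp.const_mul Complex.I).mul_const (x : ℂ)).cexp.congr_deriv ?_
  simp only [Complex.ofReal_one, id]
  ring

lemma norm_exp_I_mul_mul_sub_one_mul_div_le (g : ℝ → ℝ) (u x : ℝ) :
    ‖(Complex.exp (Complex.I * u * x) - 1) * ((g x / x : ℝ) : ℂ)‖ ≤ |u| * ‖g x‖ := by
  have hexp : ‖Complex.exp (Complex.I * u * x) - 1‖ ≤ |u| * |x| := by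
    simpa only [Complex.ofReal_mul, mul_assoc, Real.norm_eq_abs, abs_mul] using
      Real.norm_exp_I_mul_ofReal_sub_one_le (x := u * x)
  rw [norm_mul, Complex.norm_real, norm_div, Real.norm_eq_abs x]
  calc ‖Complex.exp (Complex.I * u * x) - 1‖ * (‖g x‖ / |x|)
      ≤ |u| * |x| * (‖g x‖ / |x|) := by gcongr
    _ = |u| * (‖g x‖ * (|x| / |x|)) := by ring
    _ ≤ |u| * ‖g x‖ := by
      gcongr
      exact mul_le_of_le_one_right (norm_nonneg _) (div_self_le_one _)

lemma hasDerivAt_levyExponent (hg : Integrable g) (u : ℝ) :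
    HasDerivAt (levyExponent g) (Complex.I * ft g u) u := by
  have hmeas : ∀ s : ℝ, AEStronglyMeasurable
      (fun x : ℝ => (Complex.exp (Complex.I * s * x) - 1) * ((g x / x : ℝ) : ℂ)) := fun s =>
    (Continuous.aestronglyMeasurable (by fun_prop)).mul
      (Complex.continuous_ofReal.comp_aestronglyMeasurable
        (hg.1.aemeasurable.div aemeasurable_id).aestronglyMeasurable)
  have hderiv : ∀ᵐ x : ℝ, ∀ s ∈ (Set.univ : Set ℝ), HasDerivAt
      (fun s : ℝ => (Complex.exp (Complex.I * s * x) - 1) * ((g x / x : ℝ) : ℂ))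
      (Complex.I * (Complex.exp (Complex.I * s * x) * (g x : ℂ))) s := by
    filter_upwards [Measure.ae_ne volume 0] with x hx s _
    have hx' : (x : ℂ) ≠ 0 := Complex.ofReal_ne_zero.2 hx
    refine (((hasDerivAt_exp_I_mul_mul s x).sub_const 1).mul_const _).congr_deriv ?_
    rw [Complex.ofReal_div]
    field_simp
  have h := (hasDerivAt_integral_of_dominated_loc_of_deriv_le univ_mem (.of_forall hmeas)
    ((hg.norm.const_mul |u|).mono' (hmeas u)
      (.of_forall (norm_exp_I_mul_mul_sub_one_mul_div_le g u)))
    (((Continuous.aestronglyMeasurable (by fun_prop)).mul hg.ofReal.1).const_mul _)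
    (.of_forall fun x s _ => by simp [norm_exp_I_mul_mul]) hg.norm hderiv).2
  rwa [integral_const_mul] at h

variable {P : Measure ℝ} [IsFiniteMeasure P] {Δ : ℝ}

lemma IncrementLaw.hasDerivAt_charFun (hP : IncrementLaw P Δ g) (hg : Integrable g) (u : ℝ) :
    HasDerivAt (charFun P) (Complex.I * ft (fun z => Δ * mconv g P z) u) u := by
  have hχ : charFun P = fun s : ℝ => Complex.exp (Δ * levyExponent g s) :=
    funext fun s => (charFun_eq_integral_exp_I_mul P s).trans (hP s)
  have hft : ft (fun z => Δ * mconv g P z) u = Δ * (ft g u * charFun P u) := by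
    rw [← ft_mconv hg]
    simp only [ft, ← integral_const_mul, Complex.ofReal_mul, mul_left_comm (Δ : ℂ)]
  have h := ((hasDerivAt_levyExponent hg u).const_mul (Δ : ℂ)).cexp
  rw [hft, hχ]
  refine h.congr_deriv ?_
  ring

lemma IncrementLaw.integrable_id_mul_iff (hP : IncrementLaw P Δ g) (hg : Integrable g)
    (F : ℝ → ℝ) :
    Integrable (fun z => z * F z) P ↔ Integrable fun z => Δ * mconv g P z * F z :=
  integrable_id_mul_iff_of_hasDerivAt_charFun ((integrable_mconv hg P).const_mul Δ)
    (hP.hasDerivAt_charFun hg) F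

lemma IncrementLaw.integral_id_mul_eq (hP : IncrementLaw P Δ g) (hg : Integrable g) (F : ℝ → ℝ) :
    ∫ z, z * F z ∂P = ∫ z, Δ * mconv g P z * F z :=
  integral_id_mul_eq_of_hasDerivAt_charFun ((integrable_mconv hg P).const_mul Δ)
    (hP.hasDerivAt_charFun hg) F

lemma IncrementLaw.integrable_id_and_integral_abs_le {P : Measure ℝ} [IsProbabilityMeasure P]
    (hP : IncrementLaw P Δ g) (hg : Integrable g) :
    Integrable id P ∧ ∫ z, |z| ∂P ≤ |Δ| * nl1 g := by
  obtain ⟨hid, hle⟩ := integrable_id_and_integral_abs_le_of_hasDerivAt_charFun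
    ((integrable_mconv hg P).const_mul Δ) (hP.hasDerivAt_charFun hg)
  refine ⟨hid, hle.trans ?_⟩
  calc nl1 (fun z => Δ * mconv g P z) = |Δ| * nl1 (mconv g P) := by
        simp only [nl1, abs_mul, integral_const_mul]
    _ ≤ |Δ| * nl1 g := by
        gcongr
        simpa using nl1_mconv_le hg P

end LevyIncrements

section Estimator

variable {g K : ℝ → ℝ} {h Δ : ℝ}

lemma integrable_sk_sub (hK : Integrable K) (hh : h ≠ 0) (x : ℝ) :
    Integrable fun z => sk K h (x - z) :=
  ((hK.comp_div hh).const_mul h⁻¹).comp_sub_left x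

lemma nl1_sk_sub (K : ℝ → ℝ) (hh : h ≠ 0) (x : ℝ) : nl1 (fun z => sk K h (x - z)) = nl1 K :=
  calc ∫ z, |sk K h (x - z)| = ∫ z, |sk K h z| :=
        integral_sub_left_eq_self (fun z => |sk K h z|) volume x
    _ = |h|⁻¹ * ∫ z, |K (z / h)| := by simp only [sk, abs_mul, abs_inv, integral_const_mul]
    _ = nl1 K := by
        rw [Measure.integral_comp_div (fun z => |K z|), smul_eq_mul,
          inv_mul_cancel_left₀ (abs_ne_zero.2 hh), nl1]

/-- Average `|g x| ≤ |g t| + L` over the unit interval `t ∈ [x, x + 1]`. -/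
lemma abs_le_nl1_add_of_lipschitzWith {L : NNReal} (hg : Integrable g)
    (hgL : LipschitzWith L g) (x : ℝ) : |g x| ≤ nl1 g + L := by
  have hpt : ∀ t ∈ Set.Icc x (x + 1), |g x| - L ≤ |g t| := fun t ht => by
    have hxt : |x - t| ≤ 1 := abs_le.2 ⟨by linarith [ht.2], by linarith [ht.1]⟩
    have hlip : |g x - g t| ≤ L := by
      simpa [Real.dist_eq] using hgL.dist_le_mul_of_le (x := x) (y := t) hxt
    linarith [abs_sub_abs_le_abs_sub (g x) (g t)]
  have hIcc : |g x| - L ≤ nl1 g :=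
    calc |g x| - L = ∫ _ in Set.Icc x (x + 1), (|g x| - L) := by simp
      _ ≤ ∫ t in Set.Icc x (x + 1), |g t| :=
        setIntegral_mono_on (integrableOn_const (by simp)) hg.abs.integrableOn measurableSet_Icc hpt
      _ ≤ nl1 g := setIntegral_le_integral hg.abs (.of_forall fun _ => abs_nonneg _)
  linarith

lemma mghat_eq_inv_mul_integral {n : ℕ} (hn : n ≠ 0) {x : ℝ} {P : Measure ℝ}
    [IsProbabilityMeasure P] (hK : Integrable (fun z => z * sk K h (x - z)) P) :
    mghat K h Δ n P x = Δ⁻¹ * ∫ z, z * sk K h (x - z) ∂P := by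
  have hcoord : ∀ k : Fin n, ∫ z, z k * sk K h (x - z k) ∂pm P n =
      ∫ z, z * sk K h (x - z) ∂P := fun k =>
    integral_comp_eval (μ := fun _ : Fin n => P) (i := k) hK.1
  have hn' : (n : ℝ) ≠ 0 := Nat.cast_ne_zero.2 hn
  simp only [mghat, ghat, pm] at hcoord ⊢
  rw [integral_const_mul, integral_finsetSum _ fun k _ =>
    integrable_comp_eval (μ := fun _ : Fin n => P) (i := k) hK]
  simp only [hcoord, sum_const, card_univ, Fintype.card_fin, nsmul_eq_mul]
  field_simp

lemma IncrementLaw.mghat_eq_integral_mconv_mul {n : ℕ} (hn : n ≠ 0) (hΔ : Δ ≠ 0) {x : ℝ}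
    {P : Measure ℝ} [IsProbabilityMeasure P] (hP : IncrementLaw P Δ g) (hg : Integrable g)
    (hK : Integrable fun z => mconv g P z * sk K h (x - z)) :
    mghat K h Δ n P x = ∫ z, mconv g P z * sk K h (x - z) := by
  have hZ : Integrable (fun z => z * sk K h (x - z)) P :=
    (hP.integrable_id_mul_iff hg _).2 (by simpa only [mul_assoc] using hK.const_mul Δ)
  rw [mghat_eq_inv_mul_integral hn hZ, hP.integral_id_mul_eq hg]
  simp only [mul_assoc, integral_const_mul]
  exact inv_mul_cancel_left₀ hΔ _

lemma abs_integral_mul_le {k F : ℝ → ℝ} {C : ℝ} (hF : Integrable F) (hk : ∀ x, |k x| ≤ C) :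
    |∫ x, k x * F x| ≤ C * nl1 F := by
  rw [nl1, ← integral_const_mul, ← Real.norm_eq_abs]
  refine norm_integral_le_of_norm_le (hF.abs.const_mul C) (.of_forall fun x => ?_)
  rw [norm_mul]
  exact mul_le_mul_of_nonneg_right (hk x) (norm_nonneg _)

lemma G5.lipschitzWith (hg : G5 g) : LipschitzWith (nsup (deriv g)).toNNReal g :=
  lipschitzWith_of_nnnorm_deriv_le hg.1 fun x => by
    rw [← NNReal.coe_le_coe]
    exact (le_ciSup hg.2 x).trans (Real.le_coe_toNNReal _)

theorem b2_bound_general (g K : ℝ → ℝ) (x₀ : ℝ) (L : NNReal)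
    (hg : Integrable g) (hgL : LipschitzWith L g) (hK : Integrable K)
    (h Δ : ℝ) (hh : h ≠ 0) (hΔ : Δ ≠ 0) (n : ℕ) (hn : n ≠ 0)
    (P : Measure ℝ) [IsProbabilityMeasure P] (hP : IncrementLaw P Δ g) :
    |mghat K h Δ n P x₀ - ∫ u, sk K h (x₀ - u) * g u| ≤ L * nl1 K * nl1 g * |Δ| := by
  have hF := integrable_sk_sub hK hh x₀
  have hg_le := abs_le_nl1_add_of_lipschitzWith hg hgL
  have hgF : Integrable fun z => g z * sk K h (x₀ - z) :=
    hF.bdd_mul hg.1 (.of_forall hg_le)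
  have hmF : Integrable fun z => mconv g P z * sk K h (x₀ - z) :=
    hF.bdd_mul (integrable_mconv hg P).1 (.of_forall (abs_mconv_le hg_le P))
  obtain ⟨hid, hmoment⟩ := hP.integrable_id_and_integral_abs_le hg
  have hdiff : ∀ z, |mconv g P z - g z| ≤ L * (|Δ| * nl1 g) := fun z =>
    (abs_mconv_sub_le hgL hid z).trans (by gcongr)
  simp only [hP.mghat_eq_integral_mconv_mul hn hΔ hg hmF, mul_comm _ (g _)]
  calc |(∫ z, mconv g P z * sk K h (x₀ - z)) - ∫ z, g z * sk K h (x₀ - z)|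
      = |∫ z, (mconv g P z - g z) * sk K h (x₀ - z)| := by
        simp only [sub_mul, integral_sub hmF hgF]
    _ ≤ L * (|Δ| * nl1 g) * nl1 fun z => sk K h (x₀ - z) := abs_integral_mul_le hF hdiff
    _ = L * nl1 K * nl1 g * |Δ| := by
        rw [nl1_sk_sub K hh]
        ring

end Estimator

/-- Bound on the approximation bias `b₂`. -/
theorem b2_bound (g K : ℝ → ℝ) (x₀ : ℝ) (hx₀ : x₀ ≠ 0)
    (hg1 : Integrable g) (hG5 : G5 g) (hKint : Integrable K)
    (h Δ : ℝ) (hh : 0 < h) (hΔ : 0 < Δ) (n : ℕ) (hn : 1 ≤ n)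
    (P : Measure ℝ) [IsProbabilityMeasure P] (hP : IncrementLaw P Δ g) :
    |mghat K h Δ n P x₀ - ∫ u : ℝ, sk K h (x₀ - u) * g u| ≤
      2 * nsup (deriv g) * nl1 K * nl1 g * Δ := by
  have hbias := b2_bound_general g K x₀ _ hg1 hG5.lipschitzWith hKint h Δ hh.ne' hΔ.ne' n
    (by lia) P hP
  have hsup : 0 ≤ nsup (deriv g) := Real.iSup_nonneg fun _ => abs_nonneg _
  have hnorms : 0 ≤ nl1 K * nl1 g * Δ := mul_nonneg (mul_nonneg
    (integral_nonneg fun _ => abs_nonneg _) (integral_nonneg fun _ => abs_nonneg _)) hΔ.le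
  rw [Real.coe_toNNReal _ hsup, abs_of_pos hΔ] at hbias
  nlinarith

end LevyAdapt
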